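/- Let R be a commutative ring. For every matrix M ∈ M_4(R) and every Suslin matrix S = S_2(v,w) ∈ M_4(R), the product M·S·M* is again a Suslin matrix, i.e. there exist v', w' ∈ R³ with M·S·M* = S_2(v',w'). -/

import Mathlib

open Matrix

noncomputable section

/-- Reindexing equivalence `Fin (2 ^ n) ⊕ Fin (2 ^ n) ≃ Fin (2 ^ (n + 1))`. -/
def pow2Equiv (n : ℕ) : Fin (2 ^ n) ⊕ Fin (2 ^ n) ≃ Fin (2 ^ (n + 1)) :=
  finSumFinEquiv.trans (finCongr (by rw [pow_succ]; ring))

/-- The Suslin matrix `S_n(v, w)` of size `2 ^ n` associated to `v, w : Fin (n+1) → R`. -/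
def sus (R : Type) [CommRing R] : (n : ℕ) → (Fin (n + 1) → R) → (Fin (n + 1) → R) →
    Matrix (Fin (2 ^ n)) (Fin (2 ^ n)) R
  | 0, v, _ => v 0 • 1
  | n + 1, v, w =>
      Matrix.reindex (pow2Equiv n) (pow2Equiv n)
        (Matrix.fromBlocks (v 0 • 1) (sus R n (v ∘ Fin.succ) (w ∘ Fin.succ))
          (-(sus R n (w ∘ Fin.succ) (v ∘ Fin.succ))ᵀ) (w 0 • 1))

/-- The conjugate Suslin matrix `S̄_n(v, w) = S_n(w, v)ᵀ`. -/
def susBar (R : Type) [CommRing R] (n : ℕ) (v w : Fin (n + 1) → R) :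
    Matrix (Fin (2 ^ n)) (Fin (2 ^ n)) R :=
  (sus R n w v)ᵀ

/-- Suslin's matrices `J_n`. -/
def Jmat (R : Type) [CommRing R] : (n : ℕ) → Matrix (Fin (2 ^ n)) (Fin (2 ^ n)) R
  | 0 => 1
  | n + 1 =>
      if Even (n + 1) then
        Matrix.reindex (pow2Equiv n) (pow2Equiv n)
          (Matrix.fromBlocks (Jmat R n) 0 0 (-(Jmat R n)))
      else
        Matrix.reindex (pow2Equiv n) (pow2Equiv n)
          (Matrix.fromBlocks 0 (Jmat R n) (-(Jmat R n)) 0)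

/-- The involution `M ↦ M* = J_n · Mᵀ · J_nᵀ`. -/
def invol (R : Type) [CommRing R] (n : ℕ) (M : Matrix (Fin (2 ^ n)) (Fin (2 ^ n)) R) :
    Matrix (Fin (2 ^ n)) (Fin (2 ^ n)) R :=
  Jmat R n * Mᵀ * (Jmat R n)ᵀ

/-- `φ(v, w) = [[0, S_n(v,w)], [S̄_n(v,w), 0]]` (note the shift: vectors in `R^{n+1}`,
matrices of size `2 ^ (n + 1)`). -/
def phiMat (R : Type) [CommRing R] (n : ℕ) (v w : Fin (n + 1) → R) :
    Matrix (Fin (2 ^ (n + 1))) (Fin (2 ^ (n + 1))) R :=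
  Matrix.reindex (pow2Equiv n) (pow2Equiv n)
    (Matrix.fromBlocks 0 (sus R n v w) (susBar R n v w) 0)

/-- The set of Suslin matrices of size `2 ^ m`. -/
def SuslinSet (R : Type) [CommRing R] (m : ℕ) : Set (Matrix (Fin (2 ^ m)) (Fin (2 ^ m)) R) :=
  {S | ∃ v w : Fin (m + 1) → R, S = sus R m v w}

/-- The image of the hyperbolic space `R^{m+1} ⊕ R^{m+1}` inside the Clifford algebra
`M_{2^{m+1}}(R)`. -/
def PhiSet (R : Type) [CommRing R] (m : ℕ) :
    Set (Matrix (Fin (2 ^ (m + 1))) (Fin (2 ^ (m + 1))) R) :=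
  {x | ∃ v w : Fin (m + 1) → R, x = phiMat R m v w}

/-- The block diagonal matrix `diag(g₁, g₂)`. -/
def diagBlock (R : Type) [CommRing R] (m : ℕ)
    (g₁ g₂ : Matrix (Fin (2 ^ m)) (Fin (2 ^ m)) R) :
    Matrix (Fin (2 ^ (m + 1))) (Fin (2 ^ (m + 1))) R :=
  Matrix.reindex (pow2Equiv m) (pow2Equiv m) (Matrix.fromBlocks g₁ 0 0 g₂)

/-- `Spin_{2(m+1)}(R)`, as the set of pairs `(g₁, g₂)` such that `x = diag(g₁, g₂)`
satisfies `x · x* = 1` and conjugation by `x` maps the image of the hyperbolic space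
onto itself. -/
def SpinPair (R : Type) [CommRing R] (m : ℕ) :
    Set (Matrix (Fin (2 ^ m)) (Fin (2 ^ m)) R × Matrix (Fin (2 ^ m)) (Fin (2 ^ m)) R) :=
  {p | IsUnit p.1 ∧ IsUnit p.2 ∧
    diagBlock R m p.1 p.2 * invol R (m + 1) (diagBlock R m p.1 p.2) = 1 ∧
    (fun y => diagBlock R m p.1 p.2 * y * (diagBlock R m p.1 p.2)⁻¹) '' PhiSet R m
      = PhiSet R m}

/-- The group `G_m(R)` of `g ∈ GL_{2^m}(R)` such that `g · S · g*` is a Suslin matrix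
for every Suslin matrix `S`. -/
def GSet (R : Type) [CommRing R] (m : ℕ) : Set (Matrix (Fin (2 ^ m)) (Fin (2 ^ m)) R) :=
  {g | IsUnit g ∧ ∀ S ∈ SuslinSet R m, g * S * invol R m g ∈ SuslinSet R m}

/-- The group `SG_m(R)` of `g ∈ G_m(R)` preserving the length `l(S(v,w)) = v ⬝ᵥ w`. -/
def SGSet (R : Type) [CommRing R] (m : ℕ) : Set (Matrix (Fin (2 ^ m)) (Fin (2 ^ m)) R) :=
  {g | g ∈ GSet R m ∧ ∀ v w v' w' : Fin (m + 1) → R,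
    g * sus R m v w * invol R m g = sus R m v' w' → v' ⬝ᵥ w' = v ⬝ᵥ w}

/-- The hyperbolic quadratic form `q(v, w) = v ⬝ᵥ w` on `R^n ⊕ R^n`. -/
def hypForm (R : Type) [CommRing R] (n : ℕ) :
    QuadraticForm R ((Fin n → R) × (Fin n → R)) :=
  LinearMap.BilinMap.toQuadraticMap
    (LinearMap.mk₂ R (fun x y => x.1 ⬝ᵥ y.2)
      (fun x x' y => by simp [add_dotProduct])
      (fun c x y => by simp [smul_dotProduct])
      (fun x y y' => by simp [dotProduct_add])
      (fun x c y => by simp [dotProduct_smul]))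

/-- `E_i = S_m(e_i, 0)`. -/
def Emat (R : Type) [CommRing R] (m : ℕ) (i : Fin (m + 1)) :
    Matrix (Fin (2 ^ m)) (Fin (2 ^ m)) R :=
  sus R m (Pi.single i 1) 0

/-- `F_i = S_m(0, e_i)`. -/
def Fmat (R : Type) [CommRing R] (m : ℕ) (i : Fin (m + 1)) :
    Matrix (Fin (2 ^ m)) (Fin (2 ^ m)) R :=
  sus R m 0 (Pi.single i 1)


lemma sus_two_eq (R : Type) [CommRing R] (v w : Fin 3 → R) :
    sus R 2 v w = (!![v 0, 0, v 1, v 2; 0, v 0, -w 2, w 1; -w 1, v 2, w 0, 0;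
      -w 2, -v 1, 0, w 0] : Matrix (Fin 4) (Fin 4) R) := by
  ext i j
  change Fin 4 at i j
  fin_cases i <;> fin_cases j <;>
    simp [sus, pow2Equiv, finSumFinEquiv, Fin.addCases, Matrix.fromBlocks, Matrix.one_apply] <;> rfl

lemma Jmat_two_eq (R : Type) [CommRing R] :
    Jmat R 2 = (!![0, 1, 0, 0; -1, 0, 0, 0; 0, 0, 0, -1; 0, 0, 1, 0] :
      Matrix (Fin 4) (Fin 4) R) := by
  have h2 : Even (1 + 1) := by decide
  have h1 : ¬ Even (0 + 1) := by decide
  ext i j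
  change Fin 4 at i j
  fin_cases i <;> fin_cases j <;>
    simp [Jmat, pow2Equiv, finSumFinEquiv, Fin.addCases, Matrix.fromBlocks, Matrix.one_apply] <;> rfl

set_option maxHeartbeats 4000000 in
lemma sandwich_aux (R : Type) [CommRing R] (M : Matrix (Fin 4) (Fin 4) R) (v w : Fin 3 → R)
    (S J P : Matrix (Fin 4) (Fin 4) R)
    (hS : S = !![v 0, 0, v 1, v 2; 0, v 0, -w 2, w 1; -w 1, v 2, w 0, 0; -w 2, -v 1, 0, w 0])
    (hJ : J = !![0, 1, 0, 0; -1, 0, 0, 0; 0, 0, 0, -1; 0, 0, 1, 0])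
    (hP : P = M * S * (J * Mᵀ * Jᵀ)) :
    P = !![P 0 0, 0, P 0 2, P 0 3; 0, P 0 0, -(-P 3 0), -P 2 0; -(-P 2 0), P 0 3, P 2 2, 0;
      -(-P 3 0), -P 0 2, 0, P 2 2] := by
  have key : ∀ i j, P i j = ∑ k, (∑ l, M i l * S l k) * ∑ n, (∑ m, J k m * M n m) * J j n := by
    intro i j
    simp only [hP, Matrix.mul_apply, Matrix.transpose_apply]
  simp only [Fin.sum_univ_four] at key
  clear hP
  subst hS hJ
  ext i j
  fin_cases i <;> fin_cases j <;> simp [key] <;> ring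

/-- for every `M ∈ M_4(R)` and every Suslin matrix `S = S_2(v,w)`,
the product `M·S·M*` is again a Suslin matrix. -/
theorem sandwich_four (R : Type) [CommRing R]
    (M : Matrix (Fin (2 ^ 2)) (Fin (2 ^ 2)) R) (v w : Fin 3 → R) :
    ∃ v' w' : Fin 3 → R, M * sus R 2 v w * invol R 2 M = sus R 2 v' w' := by
  exact ⟨_, _, (sandwich_aux R M v w _ _ _ (sus_two_eq R v w) (Jmat_two_eq R) rfl).trans
    (sus_two_eq R
      ![(M * sus R 2 v w * invol R 2 M) (0 : Fin 4) (0 : Fin 4),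
        (M * sus R 2 v w * invol R 2 M) (0 : Fin 4) (2 : Fin 4),
        (M * sus R 2 v w * invol R 2 M) (0 : Fin 4) (3 : Fin 4)]
      ![(M * sus R 2 v w * invol R 2 M) (2 : Fin 4) (2 : Fin 4),
        -(M * sus R 2 v w * invol R 2 M) (2 : Fin 4) (0 : Fin 4),
        -(M * sus R 2 v w * invol R 2 M) (3 : Fin 4) (0 : Fin 4)]).symm⟩
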